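/- For any short exact sequence 0 → V' →^i V →^j V'' → 0 of finite-dimensional real vector spaces, the dual sequence 0 → (V'')* →^{j*} V* →^{i*} (V')* → 0 is exact, and for nonzero v' ∈ λ(V') and nonzero v'' ∈ λ(V/i(V')), the identity P((λ(i)v' ∧_V v'')*) = P(v''*) ∧_{V*} λ(i*)^{-1} P(v'*) holds in λ(V*), where P denotes the canonical isomorphisms λ(U*) ≅ λ(U)* with sign (-1)^{binom(dim U, 2)}. -/

import Mathlib

open Module TensorProduct Function

noncomputable section

/-- The wedge `v 0 ∧ ... ∧ v (n-1)` as an element of the `n`-th exterior power. -/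
def wedge {V : Type*} [AddCommGroup V] [Module ℝ V] (n : ℕ) (v : Fin n → V) :
    ⋀[ℝ]^n V :=
  ⟨ExteriorAlgebra.ιMulti ℝ n v, ExteriorAlgebra.ιMulti_range ℝ n ⟨v, rfl⟩⟩

/-- `Φ` realizes the canonical isomorphism `λ(V') ⊗ λ(V'') ≅ λ(V)` attached to a short
exact sequence `0 → V' →ⁱ V →ʲ V'' → 0`. -/
def IsSESWedge {V' V V'' : Type*} [AddCommGroup V'] [Module ℝ V'] [AddCommGroup V]
    [Module ℝ V] [AddCommGroup V''] [Module ℝ V'']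
    (k l n : ℕ) (hn : n = k + l) (i : V' →ₗ[ℝ] V) (j : V →ₗ[ℝ] V'')
    (Φ : ((⋀[ℝ]^k V') ⊗[ℝ] (⋀[ℝ]^l V'')) →ₗ[ℝ] ⋀[ℝ]^n V) : Prop :=
  ∀ (v' : Fin k → V') (v : Fin l → V),
    LinearIndependent ℝ v' → LinearIndependent ℝ (j ∘ v) →
      Φ (wedge k v' ⊗ₜ[ℝ] wedge l (j ∘ v)) =
        wedge n (Fin.append (i ∘ v') v ∘ Fin.cast hn)

/-- `P : λ(V*) → λ(V)*` satisfies the determinant formula with the sign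
`(-1)^{n choose 2}`. -/
def IsDetPairing {V : Type*} [AddCommGroup V] [Module ℝ V] (n : ℕ)
    (P : (⋀[ℝ]^n (Module.Dual ℝ V)) →ₗ[ℝ] Module.Dual ℝ (⋀[ℝ]^n V)) : Prop :=
  ∀ (α : Fin n → Module.Dual ℝ V) (v : Fin n → V),
    P (wedge n α) (wedge n v) =
      (-1 : ℝ) ^ (n.choose 2) * Matrix.det (Matrix.of fun a b => α a (v b))

/-!
The canonical isomorphisms are multiplicative along a short exact sequence:
`P (ω'' ∧ ω') (v' ∧ v'') = P ω' v' * P ω'' v''`. On wedges the left side is, up to sign, the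
determinant of a matrix whose block pairing `(V'')*` with `V'` vanishes. With `k = dim V'` and
`l = dim V''`, moving the two column blocks into place costs `(-1) ^ (k * l)`, which is exactly the
discrepancy between `(-1) ^ (k + l).choose 2` and `(-1) ^ k.choose 2 * (-1) ^ l.choose 2`.
Hence both sides of the identity, read as functionals on the line `λ(V)`, take the value
`1` at `v' ∧ v''` and therefore coincide.
-/

section BlockSwap

variable {R : Type*} [CommRing R]

theorem choose_two_add (k l : ℕ) : (k + l).choose 2 = k.choose 2 + l.choose 2 + k * l := by
  simp only [Nat.add_choose_eq, Finset.Nat.sum_antidiagonal_succ, Nat.reduceAdd,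
    Finset.Nat.antidiagonal_zero, Finset.sum_singleton, Nat.choose_zero_right, Nat.choose_one_right]
  ring

theorem neg_one_pow_choose_two_add_mul (k l : ℕ) :
    (-1 : R) ^ (k + l).choose 2 * (-1) ^ (k * l) = (-1) ^ k.choose 2 * (-1) ^ l.choose 2 := by
  rw [choose_two_add, pow_add _ _ (k * l), mul_assoc, ← mul_pow, neg_one_mul, neg_neg, one_pow,
    mul_one, pow_add]

theorem finRotate_pow_apply (n k : ℕ) [NeZero n] (x : Fin n) :
    (finRotate n ^ k) x = x + Fin.ofNat n k := by
  induction k with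
  | zero => simp
  | succ k ih =>
    rw [pow_succ', Equiv.Perm.mul_apply, ih, finRotate_apply]
    ext
    simp [Fin.val_add, add_assoc]

theorem finAddFlip_trans_finCongr_eq_finRotate_pow (k l : ℕ) :
    (finAddFlip (m := l) (n := k)).trans (finCongr (Nat.add_comm k l)) = finRotate (l + k) ^ k := by
  ext x
  have : NeZero (l + k) := x.neZero
  rw [finRotate_pow_apply, Fin.val_add]
  refine Fin.addCases (fun a => ?_) (fun b => ?_) x
  · simp [Nat.mod_eq_of_lt, add_comm]
  · have hb : (b : ℕ) < l + k := by omega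
    have hval : l + (b : ℕ) + k = b + (l + k) := by omega
    simp [hval, Nat.mod_eq_of_lt hb]

theorem sign_finAddFlip_trans_finCongr (k l : ℕ) :
    Equiv.Perm.sign ((finAddFlip (m := l) (n := k)).trans (finCongr (Nat.add_comm k l))) =
      (-1) ^ (k * l) := by
  rw [finAddFlip_trans_finCongr_eq_finRotate_pow, map_pow, sign_finRotate, ← pow_mul]
  rcases k with _ | k
  · simp
  · have hexp : (l + (k + 1) - 1) * (k + 1) = k * (k + 1) + (k + 1) * l := by
      rw [← add_assoc, Nat.add_sub_cancel]
      ring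
    rw [hexp, pow_add, (Nat.even_mul_succ_self k).neg_one_pow, one_mul]

theorem det_append_append_of_apply_eq_zero {X Y : Type*} (B : X → Y → R) {k l n : ℕ}
    (hn : n = k + l) (hn' : n = l + k) (x : Fin l → X) (x' : Fin k → X)
    (y' : Fin k → Y) (y : Fin l → Y) (hB : ∀ a b, B (x a) (y' b) = 0) :
    Matrix.det (Matrix.of fun a b =>
        B ((Fin.append x x' ∘ Fin.cast hn') a) ((Fin.append y' y ∘ Fin.cast hn) b)) =
      (-1) ^ (k * l) * (Matrix.det (Matrix.of fun a b => B (x' a) (y' b)) *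
        Matrix.det (Matrix.of fun a b => B (x a) (y b))) := by
  subst hn'
  set M := Matrix.of fun a b =>
    B ((Fin.append x x' ∘ Fin.cast rfl) a) ((Fin.append y' y ∘ Fin.cast hn) b) with hM
  let σ := (finAddFlip (m := l) (n := k)).trans (finCongr (Nat.add_comm k l))
  have hblocks : (M.submatrix id σ).submatrix finSumFinEquiv finSumFinEquiv =
      Matrix.fromBlocks (Matrix.of fun a b => B (x a) (y b)) 0
        (Matrix.of fun a b => B (x' a) (y b)) (Matrix.of fun a b => B (x' a) (y' b)) := by
    ext (a | a) (b | b) <;> simp [hM, σ, hB]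
  have hσM := Matrix.det_permute' σ M
  rw [← Matrix.det_submatrix_equiv_self finSumFinEquiv, hblocks, Matrix.det_fromBlocks_zero₁₂,
    sign_finAddFlip_trans_finCongr] at hσM
  rw [mul_comm (Matrix.det _), hσM]
  push_cast
  rw [← mul_assoc, ← mul_pow, neg_one_mul, neg_neg, one_pow, one_mul]

end BlockSwap

section LinearAlgebra

variable {K V' V V'' : Type*} [Field K] [AddCommGroup V'] [Module K V'] [AddCommGroup V]
  [Module K V] [AddCommGroup V''] [Module K V'']

theorem range_dualMap_eq_ker_dualMap {i : V' →ₗ[K] V} {j : V →ₗ[K] V''} (hij : Exact i j) :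
    LinearMap.range j.dualMap = LinearMap.ker i.dualMap := by
  rw [LinearMap.range_dualMap_eq_dualAnnihilator_ker,
    LinearMap.ker_dualMap_eq_dualAnnihilator_range, hij.linearMap_ker_eq]

theorem linearMap_eq_of_finrank_eq_one (hV : finrank K V = 1) {f g : V →ₗ[K] V''} {v : V}
    (hv : v ≠ 0) (hfg : f v = g v) : f = g := by
  ext x
  obtain ⟨c, rfl⟩ := (finrank_eq_one_iff_of_nonzero' v hv).1 hV x
  rw [map_smul, map_smul, hfg]

theorem finrank_exteriorPower_finrank [FiniteDimensional K V] :
    finrank K (⋀[K]^(finrank K V) V) = 1 := by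
  rw [exteriorPower.finrank_eq, Nat.choose_self]

end LinearAlgebra

section Wedge

variable {V M : Type*} [AddCommGroup V] [Module ℝ V] [AddCommGroup M] [Module ℝ M] {n : ℕ}

theorem linearMap_ext_wedge_of_linearIndependent {f g : ⋀[ℝ]^n V →ₗ[ℝ] M}
    (hfg : ∀ v : Fin n → V, LinearIndependent ℝ v → f (wedge n v) = g (wedge n v)) : f = g := by
  ext v
  by_cases hv : LinearIndependent ℝ v
  · exact hfg v hv
  · simp [(exteriorPower.ιMulti ℝ n).map_linearDependent v hv]

end Wedge

section ShortExactSequence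

variable {V' V V'' : Type*} [AddCommGroup V'] [Module ℝ V'] [AddCommGroup V] [Module ℝ V]
  [AddCommGroup V''] [Module ℝ V''] {k l n : ℕ} {hn : n = k + l} {hn' : n = l + k}
  {i : V' →ₗ[ℝ] V} {j : V →ₗ[ℝ] V''}
  {Φ : ((⋀[ℝ]^k V') ⊗[ℝ] (⋀[ℝ]^l V'')) →ₗ[ℝ] ⋀[ℝ]^n V}
  {Φd : ((⋀[ℝ]^l (Dual ℝ V'')) ⊗[ℝ] (⋀[ℝ]^k (Dual ℝ V'))) →ₗ[ℝ] ⋀[ℝ]^n (Dual ℝ V)}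
  {P : (⋀[ℝ]^n (Dual ℝ V)) →ₗ[ℝ] Dual ℝ (⋀[ℝ]^n V)}
  {P' : (⋀[ℝ]^k (Dual ℝ V')) →ₗ[ℝ] Dual ℝ (⋀[ℝ]^k V')}
  {P'' : (⋀[ℝ]^l (Dual ℝ V'')) →ₗ[ℝ] Dual ℝ (⋀[ℝ]^l V'')}

theorem IsDetPairing.apply_wedge_append (hP : IsDetPairing n P) (hP' : IsDetPairing k P')
    (hP'' : IsDetPairing l P'') (hji : j ∘ₗ i = 0) (α : Fin l → Dual ℝ V'')
    (β : Fin k → Dual ℝ V) (u : Fin k → V') (w : Fin l → V) :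
    P (wedge n (Fin.append (j.dualMap ∘ α) β ∘ Fin.cast hn'))
        (wedge n (Fin.append (i ∘ u) w ∘ Fin.cast hn)) =
      P' (wedge k (i.dualMap ∘ β)) (wedge k u) * P'' (wedge l α) (wedge l (j ∘ w)) := by
  have hzero (a : Fin l) (b : Fin k) : (j.dualMap ∘ α) a ((i ∘ u) b) = 0 := by
    simpa using congrArg (α a) (LinearMap.congr_fun hji (u b))
  rw [hP, hP', hP'',
    det_append_append_of_apply_eq_zero (fun (φ : Dual ℝ V) v => φ v) hn hn' _ _ _ _ hzero,
    ← mul_assoc, hn, neg_one_pow_choose_two_add_mul, mul_mul_mul_comm]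
  rfl

theorem IsDetPairing.apply_sesWedge (hP : IsDetPairing n P) (hP' : IsDetPairing k P')
    (hP'' : IsDetPairing l P'') (hi : Injective i) (hj : Surjective j) (hji : j ∘ₗ i = 0)
    (hΦ : IsSESWedge k l n hn i j Φ) (hΦd : IsSESWedge l k n hn' j.dualMap i.dualMap Φd)
    (ω'' : ⋀[ℝ]^l (Dual ℝ V'')) (ω' : ⋀[ℝ]^k (Dual ℝ V')) (v' : ⋀[ℝ]^k V') (v'' : ⋀[ℝ]^l V'') :
    P (Φd (ω'' ⊗ₜ[ℝ] ω')) (Φ (v' ⊗ₜ[ℝ] v'')) = P' ω' v' * P'' ω'' v'' := by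
  suffices hmaps : Φ.dualMap ∘ₗ P ∘ₗ Φd = TensorProduct.dualDistrib ℝ _ _ ∘ₗ
      TensorProduct.map P' P'' ∘ₗ (TensorProduct.comm ℝ _ _).toLinearMap from
    LinearMap.congr_fun (LinearMap.congr_fun hmaps (ω'' ⊗ₜ[ℝ] ω')) (v' ⊗ₜ[ℝ] v'')
  refine TensorProduct.ext <| linearMap_ext_wedge_of_linearIndependent fun α hα =>
    linearMap_ext_wedge_of_linearIndependent fun β hβ => TensorProduct.ext <|
    linearMap_ext_wedge_of_linearIndependent fun u hu =>
    linearMap_ext_wedge_of_linearIndependent fun w hw => ?_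
  obtain ⟨β, rfl⟩ := (LinearMap.dualMap_surjective_of_injective hi).comp_left β
  obtain ⟨w, rfl⟩ := hj.comp_left w
  change P (Φd (wedge l α ⊗ₜ[ℝ] wedge k (i.dualMap ∘ β)))
    (Φ (wedge k u ⊗ₜ[ℝ] wedge l (j ∘ w))) = _
  rw [hΦ u w hu hw, hΦd α β hα hβ]
  exact hP.apply_wedge_append hP' hP'' hji α β u w

end ShortExactSequence

theorem dual_ses_and_det_pairing_identity_general
    {V' V V'' : Type*} [AddCommGroup V'] [Module ℝ V'] [AddCommGroup V] [Module ℝ V]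
    [AddCommGroup V''] [Module ℝ V''] [FiniteDimensional ℝ V]
    {i : V' →ₗ[ℝ] V} {j : V →ₗ[ℝ] V''} (hi : Injective i) (hj : Surjective j) (hij : Exact i j)
    {hn : finrank ℝ V = finrank ℝ V' + finrank ℝ V''}
    {hn' : finrank ℝ V = finrank ℝ V'' + finrank ℝ V'}
    {Φ : ((⋀[ℝ]^(finrank ℝ V') V') ⊗[ℝ] (⋀[ℝ]^(finrank ℝ V'') V'')) →ₗ[ℝ] ⋀[ℝ]^(finrank ℝ V) V}
    (hΦ : IsSESWedge _ _ _ hn i j Φ)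
    {Φd : ((⋀[ℝ]^(finrank ℝ V'') (Dual ℝ V'')) ⊗[ℝ] (⋀[ℝ]^(finrank ℝ V') (Dual ℝ V'))) →ₗ[ℝ]
      ⋀[ℝ]^(finrank ℝ V) (Dual ℝ V)}
    (hΦd : IsSESWedge _ _ _ hn' j.dualMap i.dualMap Φd)
    {PV : (⋀[ℝ]^(finrank ℝ V) (Dual ℝ V)) ≃ₗ[ℝ] Dual ℝ (⋀[ℝ]^(finrank ℝ V) V)}
    (hPV : IsDetPairing _ PV.toLinearMap)
    {PV' : (⋀[ℝ]^(finrank ℝ V') (Dual ℝ V')) ≃ₗ[ℝ] Dual ℝ (⋀[ℝ]^(finrank ℝ V') V')}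
    (hPV' : IsDetPairing _ PV'.toLinearMap)
    {PV'' : (⋀[ℝ]^(finrank ℝ V'') (Dual ℝ V'')) ≃ₗ[ℝ] Dual ℝ (⋀[ℝ]^(finrank ℝ V'') V'')}
    (hPV'' : IsDetPairing _ PV''.toLinearMap)
    {v' : ⋀[ℝ]^(finrank ℝ V') V'} {v'' : ⋀[ℝ]^(finrank ℝ V'') V''}
    {a' : Dual ℝ (⋀[ℝ]^(finrank ℝ V') V')} (ha' : a' v' = 1)
    {a'' : Dual ℝ (⋀[ℝ]^(finrank ℝ V'') V'')} (ha'' : a'' v'' = 1)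
    {A : Dual ℝ (⋀[ℝ]^(finrank ℝ V) V)} (hA : A (Φ (v' ⊗ₜ[ℝ] v'')) = 1) :
    (Injective j.dualMap ∧ Surjective i.dualMap ∧
      LinearMap.range j.dualMap = LinearMap.ker i.dualMap) ∧
    PV.symm A = Φd (PV''.symm a'' ⊗ₜ[ℝ] PV'.symm a') := by
  refine ⟨⟨LinearMap.dualMap_injective_of_surjective hj,
    LinearMap.dualMap_surjective_of_injective hi, range_dualMap_eq_ker_dualMap hij⟩, ?_⟩
  have hne : Φ (v' ⊗ₜ[ℝ] v'') ≠ 0 := fun h => by simp [h] at hA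
  have heval : PV (Φd (PV''.symm a'' ⊗ₜ[ℝ] PV'.symm a')) (Φ (v' ⊗ₜ[ℝ] v'')) = 1 := by
    simpa [ha', ha''] using hPV.apply_sesWedge hPV' hPV'' hi hj hij.linearMap_comp_eq_zero hΦ hΦd
      (PV''.symm a'') (PV'.symm a') v' v''
  rw [LinearEquiv.symm_apply_eq]
  exact linearMap_eq_of_finrank_eq_one finrank_exteriorPower_finrank hne (hA.trans heval.symm)

/-- For a short exact sequence `0 → V' →ⁱ V →ʲ V'' → 0` (with `V'' = V / i(V')`), the
dual sequence `0 → (V'')* →^{j*} V* →^{i*} (V')* → 0` is exact, and for nonzero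
`v' ∈ λ(V')` and `v'' ∈ λ(V/i(V'))` one has
`𝒫((λ(i)v' ∧_V v'')^*) = 𝒫(v''^*) ∧_{V*} λ(i*)⁻¹ 𝒫(v'^*)` in `λ(V*)`. -/
theorem dual_ses_and_det_pairing_identity
    {V' V : Type*} [AddCommGroup V'] [Module ℝ V'] [AddCommGroup V] [Module ℝ V]
    [FiniteDimensional ℝ V'] [FiniteDimensional ℝ V]
    (i : V' →ₗ[ℝ] V) (hi : Function.Injective i)
    (hn : finrank ℝ V = finrank ℝ V' + finrank ℝ (V ⧸ LinearMap.range i))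
    (hn' : finrank ℝ V = finrank ℝ (V ⧸ LinearMap.range i) + finrank ℝ V')
    (Φ : ((⋀[ℝ]^(finrank ℝ V') V') ⊗[ℝ]
        (⋀[ℝ]^(finrank ℝ (V ⧸ LinearMap.range i)) (V ⧸ LinearMap.range i))) →ₗ[ℝ]
      ⋀[ℝ]^(finrank ℝ V) V)
    (hΦ : IsSESWedge (finrank ℝ V') (finrank ℝ (V ⧸ LinearMap.range i)) (finrank ℝ V)
      hn i (LinearMap.range i).mkQ Φ)
    (Φd : ((⋀[ℝ]^(finrank ℝ (V ⧸ LinearMap.range i))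
          (Module.Dual ℝ (V ⧸ LinearMap.range i))) ⊗[ℝ]
        (⋀[ℝ]^(finrank ℝ V') (Module.Dual ℝ V'))) →ₗ[ℝ]
      ⋀[ℝ]^(finrank ℝ V) (Module.Dual ℝ V))
    (hΦd : IsSESWedge (finrank ℝ (V ⧸ LinearMap.range i)) (finrank ℝ V')
      (finrank ℝ V) hn' ((LinearMap.range i).mkQ).dualMap i.dualMap Φd)
    (PV : (⋀[ℝ]^(finrank ℝ V) (Module.Dual ℝ V)) ≃ₗ[ℝ]
      Module.Dual ℝ (⋀[ℝ]^(finrank ℝ V) V))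
    (hPV : IsDetPairing (finrank ℝ V) PV.toLinearMap)
    (PV' : (⋀[ℝ]^(finrank ℝ V') (Module.Dual ℝ V')) ≃ₗ[ℝ]
      Module.Dual ℝ (⋀[ℝ]^(finrank ℝ V') V'))
    (hPV' : IsDetPairing (finrank ℝ V') PV'.toLinearMap)
    (PQ : (⋀[ℝ]^(finrank ℝ (V ⧸ LinearMap.range i))
        (Module.Dual ℝ (V ⧸ LinearMap.range i))) ≃ₗ[ℝ]
      Module.Dual ℝ (⋀[ℝ]^(finrank ℝ (V ⧸ LinearMap.range i)) (V ⧸ LinearMap.range i)))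
    (hPQ : IsDetPairing (finrank ℝ (V ⧸ LinearMap.range i)) PQ.toLinearMap)
    (v' : ⋀[ℝ]^(finrank ℝ V') V') (hv' : v' ≠ 0)
    (v'' : ⋀[ℝ]^(finrank ℝ (V ⧸ LinearMap.range i)) (V ⧸ LinearMap.range i))
    (hv'' : v'' ≠ 0)
    (a' : Module.Dual ℝ (⋀[ℝ]^(finrank ℝ V') V')) (ha' : a' v' = 1)
    (a'' : Module.Dual ℝ
      (⋀[ℝ]^(finrank ℝ (V ⧸ LinearMap.range i)) (V ⧸ LinearMap.range i)))
    (ha'' : a'' v'' = 1)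
    (A : Module.Dual ℝ (⋀[ℝ]^(finrank ℝ V) V)) (hA : A (Φ (v' ⊗ₜ[ℝ] v'')) = 1) :
    -- the dual sequence is exact
    (Function.Injective ((LinearMap.range i).mkQ).dualMap ∧
     Function.Surjective i.dualMap ∧
     LinearMap.range ((LinearMap.range i).mkQ).dualMap = LinearMap.ker i.dualMap) ∧
    -- the determinant-pairing identity
    PV.symm A = Φd (PQ.symm a'' ⊗ₜ[ℝ] PV'.symm a') :=
  dual_ses_and_det_pairing_identity_general hi (Submodule.mkQ_surjective _)
    (LinearMap.exact_map_mkQ_range i) hΦ hΦd hPV hPV' hPQ ha' ha'' hA
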